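/- Let α ∈ ((√33 − 5)/2, √2 − 1), let T_α(x) = 2/x − ⌊2/x − α⌋ on [α, α+1] with digit d(x) = ⌊2/x − α⌋, and set A = (√33 − 5)/2, B = √2 − 1, C = (√33 − 3)/6, D = 2√2 − 2, E = (√33 − 3)/2, F = √2. Define the lower boundary ℓ(x) = A for x ∈ [α, (6α−2)/(1−α)], ℓ(x) = B for x ∈ ((6α−2)/(1−α), (2−4α)/α], ℓ(x) = C for x ∈ ((2−4α)/α, α+1], and the upper boundary u(x) = D for x ∈ [α, (1−α)/(1+α)], u(x) = E for x ∈ ((1−α)/(1+α), (3α−1)/(1−2α)], u(x) = F for x ∈ ((3α−1)/(1−2α), α+1], and let Ω_α = {(x, y) : x ∈ [α, α+1], ℓ(x) ≤ y ≤ u(x)}. Then the map 𝒯(x, y) = (T_α(x), 2/(d(x) + y)) maps Ω_α into Ω_α (up to a Lebesgue-null set) and preserves the probability measure on Ω_α with density H·2/(2 + xy)² with respect to two-dimensional Lebesgue measure, where H = 1/log((1/32)(3 + 2√2)(7 + √33)(√33 − 5)²). -/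

import Mathlib

open MeasureTheory Set

/-- The `N`-expansion map for `N = 2`: `T_α(x) = 2/x - ⌊2/x - α⌋`. -/
noncomputable def Texp (α x : ℝ) : ℝ := 2 / x - ↑⌊2 / x - α⌋

/-- Lower boundary of the natural extension domain:
`A = (√33-5)/2` on `[α, (6α-2)/(1-α)]`, `B = √2-1` on `((6α-2)/(1-α), (2-4α)/α]`,
`C = (√33-3)/6` on `((2-4α)/α, α+1]`. -/
noncomputable def lb (α x : ℝ) : ℝ :=
  if x ≤ (6 * α - 2) / (1 - α) then (Real.sqrt 33 - 5) / 2
  else if x ≤ (2 - 4 * α) / α then Real.sqrt 2 - 1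
  else (Real.sqrt 33 - 3) / 6

/-- Upper boundary of the natural extension domain:
`D = 2√2-2` on `[α, (1-α)/(1+α)]`, `E = (√33-3)/2` on `((1-α)/(1+α), (3α-1)/(1-2α)]`,
`F = √2` on `((3α-1)/(1-2α), α+1]`. -/
noncomputable def ub (α x : ℝ) : ℝ :=
  if x ≤ (1 - α) / (1 + α) then 2 * Real.sqrt 2 - 2
  else if x ≤ (3 * α - 1) / (1 - 2 * α) then (Real.sqrt 33 - 3) / 2
  else Real.sqrt 2

/-- The natural extension domain `Ω_α`. -/
def natExtDom (α : ℝ) : Set (ℝ × ℝ) :=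
  {p | p.1 ∈ Icc α (α + 1) ∧ lb α p.1 ≤ p.2 ∧ p.2 ≤ ub α p.1}

/-- The natural extension map `𝒯(x, y) = (T_α(x), 2/(d(x) + y))` with `d(x) = ⌊2/x - α⌋`. -/
noncomputable def natExtMap (α : ℝ) (p : ℝ × ℝ) : ℝ × ℝ :=
  (Texp α p.1, 2 / (↑⌊2 / p.1 - α⌋ + p.2))

/-!
On the strip of digit `d` the map `𝒯` is `(x, y) ↦ (2/x - d, 2/(d + y))`, which is injective and
preserves `2 dx dy / (2 + xy)²`; so it suffices that the images of the strips tile `Ω_α` up to a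
null set. In the coordinate `z = 2/y` the fibre of `Ω_α` over a generic `x` is
`[2/u(x), 2/ℓ(x)]` and that of the image of the `d`-th strip is `d + [ℓ(2/(d+x)), u(2/(d+x))]`.
These intervals are consecutive because the two end-point orbits merge, `T³(α) = T³(α+1)`, and
because the heights satisfy
`2/A = 4+E`, `2/B = 4+D`, `2/C = 3+E`, `2/D = 2+B`, `2/E = 1+C`, `2/F = 1+B`, `E = A+1`, `F = B+1`.

The total mass is the logarithm of a quotient of twelve factors `2 + xy`, one for each corner of
`Ω_α`. Since `2 + xy = (x/y') (2 + x'y')` for `(x', y') = 𝒯(x, y)`, transporting corners to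
corners makes everything that depends on `α` cancel, and `F² A² / (B C D E)` remains.
-/

section Tiling

variable {X Y ι : Type*} [MeasurableSpace X] [MeasurableSpace Y]

theorem measurePreserving_restrict_of_image_tiling [Countable ι] {μ : Measure X} {ν : Measure Y}
    {f : X → Y} {D : Set X} {D' : Set Y} {V : ι → Set X} (hf : Measurable f)
    (hV : ∀ i, MeasurableSet (V i)) (hVD : ⋃ i, V i =ᵐ[μ] D)
    (hVdisj : Pairwise (Function.onFun (AEDisjoint μ) V))
    (hW : ∀ i, NullMeasurableSet (f '' V i) ν) (hWD : ⋃ i, f '' V i =ᵐ[ν] D')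
    (hWdisj : Pairwise (Function.onFun (AEDisjoint ν) fun i => f '' V i))
    (himage : ∀ i, ∀ S ⊆ V i, MeasurableSet S → ν (f '' S) = μ S) :
    MeasurePreserving f (μ.restrict D) (ν.restrict D') := by
  refine ⟨hf, Measure.ext fun S hS => ?_⟩
  rw [Measure.map_apply hf hS, ← Measure.restrict_congr_set hVD, ← Measure.restrict_congr_set hWD,
    Measure.restrict_iUnion_ae hVdisj fun i => (hV i).nullMeasurableSet,
    Measure.restrict_iUnion_ae hWdisj hW, Measure.sum_apply _ (hf hS), Measure.sum_apply _ hS]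
  refine tsum_congr fun i => ?_
  rw [Measure.restrict_apply (hf hS), Measure.restrict_apply hS, ← image_preimage_inter,
    himage i _ inter_subset_right ((hf hS).inter (hV i))]

end Tiling

section PlaneNullSets

theorem ae_fst_notMem {s : Set ℝ} (hs : s.Countable) : ∀ᵐ p : ℝ × ℝ, p.1 ∉ s :=
  Measure.quasiMeasurePreserving_fst.ae (hs.ae_notMem volume)

theorem ae_snd_ne_comp_fst {g : ℝ → ℝ} (hg : Measurable g) : ∀ᵐ p : ℝ × ℝ, p.2 ≠ g p.1 := by
  have hgraph : MeasurableSet {p : ℝ × ℝ | p.2 = g p.1} :=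
    measurableSet_eq_fun measurable_snd (hg.comp measurable_fst)
  exact (Measure.ae_prod_iff_ae_ae hgraph.compl).2 (.of_forall fun x => Measure.ae_ne volume (g x))

end PlaneNullSets

section ConsecutiveIntervals

variable {R : Type*} [LinearOrder R] {a b : ℤ → R} {m n : ℤ}

theorem right_le_left_of_consecutive (hab : ∀ d, a d ≤ b d)
    (hba : ∀ d ∈ Ico m n, b d = a (d + 1)) {i j : ℤ} (hi : m ≤ i) (hij : i < j) (hj : j ≤ n) :
    b i ≤ a j := by
  induction j, Int.add_one_le_of_lt hij using Int.leInduction with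
  | base => exact (hba i ⟨hi, by lia⟩).le
  | succ j hij' ih =>
    calc b i ≤ a j := ih (by lia) (by lia)
      _ ≤ b j := hab j
      _ = a (j + 1) := hba j ⟨by lia, by lia⟩

theorem exists_mem_Icc_iff_of_consecutive (hmn : m ≤ n) (hab : ∀ d, a d ≤ b d)
    (hba : ∀ d ∈ Ico m n, b d = a (d + 1)) {z : R} :
    (∃ d ∈ Icc m n, z ∈ Icc (a d) (b d)) ↔ z ∈ Icc (a m) (b n) := by
  induction n, hmn using Int.leInduction with
  | base => simp
  | succ n hmn ih =>
    have hstep : b n = a (n + 1) := hba n ⟨hmn, by lia⟩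
    have hleft : a m ≤ b n :=
      hstep ▸ (hab m).trans (right_le_left_of_consecutive hab hba le_rfl (by lia) le_rfl)
    have hright : b n ≤ b (n + 1) := hstep ▸ hab (n + 1)
    rw [← insert_Icc_right_eq_Icc_add_one (by lia), exists_mem_insert,
      ih fun d hd => hba d ⟨hd.1, hd.2.trans (by lia)⟩, ← hstep, or_comm, ← mem_union,
      Icc_union_Icc_eq_Icc hleft hright]

end ConsecutiveIntervals

section Branch

/-- The branch `(x, y) ↦ (N/x - d, N/(d + y))` of the natural extension of the `N`-expansion map
on the points whose first coordinate has digit `d`. -/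
noncomputable def natExtBranch (N d : ℝ) : ℝ × ℝ → ℝ × ℝ :=
  Prod.map (fun x => N / x - d) (fun y => N / (d + y))

/-- The measure on the plane with density `K N / (N + x y)²`. -/
noncomputable def natExtMeasure (N K : ℝ) : Measure (ℝ × ℝ) :=
  volume.withDensity fun p => ENNReal.ofReal (K * N / (N + p.1 * p.2) ^ 2)

variable {N d K : ℝ}

theorem measurable_natExtDensity (N K : ℝ) :
    Measurable fun p : ℝ × ℝ => ENNReal.ofReal (K * N / (N + p.1 * p.2) ^ 2) := by
  fun_prop

theorem natExtBranch_injective (hN : N ≠ 0) : Function.Injective (natExtBranch N d) := by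
  have hdiv : Function.Injective (N / ·) :=
    Function.LeftInverse.injective (g := (N / ·)) fun _ => div_div_cancel₀ hN
  exact (sub_left_injective.comp hdiv).prodMap (hdiv.comp (add_right_injective d))

theorem hasFDerivAt_natExtBranch {p : ℝ × ℝ} (hx : p.1 ≠ 0) (hy : d + p.2 ≠ 0) :
    HasFDerivAt (natExtBranch N d)
      ((ContinuousLinearMap.toSpanSingleton ℝ (-N / p.1 ^ 2)).prodMap
        (ContinuousLinearMap.toSpanSingleton ℝ (-N / (d + p.2) ^ 2))) p := by
  refine HasFDerivAt.prodMap p (HasDerivAt.hasFDerivAt ?_) (HasDerivAt.hasFDerivAt ?_)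
  · simpa using ((hasDerivAt_const p.1 N).div (hasDerivAt_id p.1) hx).sub_const d
  · simpa using! (hasDerivAt_const p.2 N).div ((hasDerivAt_id p.2).const_add d) hy

theorem det_prodMap_toSpanSingleton (a b : ℝ) :
    ((ContinuousLinearMap.toSpanSingleton ℝ a).prodMap
      (ContinuousLinearMap.toSpanSingleton ℝ b)).det = a * b := by
  rw [ContinuousLinearMap.det, ContinuousLinearMap.coe_prodMap, LinearMap.det_prodMap,
    LinearMap.det_ring, LinearMap.det_ring]
  simp

theorem abs_det_mul_density_natExtBranch (hN : N ≠ 0) {x y : ℝ} (hx : x ≠ 0) (hy : d + y ≠ 0) :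
    |-N / x ^ 2 * (-N / (d + y) ^ 2)| * (K * N / (N + (N / x - d) * (N / (d + y))) ^ 2) =
      K * N / (N + x * y) ^ 2 := by
  have hdet : -N / x ^ 2 * (-N / (d + y) ^ 2) = (N / (x * (d + y))) ^ 2 := by field_simp
  have hcorner : N + (N / x - d) * (N / (d + y)) = N / (x * (d + y)) * (N + x * y) := by
    field_simp
    ring
  have hscale : (N / (x * (d + y))) ^ 2 ≠ 0 := by positivity
  rw [hdet, hcorner, abs_of_nonneg (sq_nonneg _), mul_pow, ← mul_div_assoc,
    mul_div_mul_left _ _ hscale]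

theorem natExtMeasure_image_natExtBranch (hN : N ≠ 0) {V : Set (ℝ × ℝ)} (hV : MeasurableSet V)
    (hpole : ∀ p ∈ V, p.1 ≠ 0 ∧ d + p.2 ≠ 0) :
    natExtMeasure N K (natExtBranch N d '' V) = natExtMeasure N K V := by
  rw [natExtMeasure, withDensity_apply', withDensity_apply _ hV,
    lintegral_image_eq_lintegral_abs_det_fderiv_mul volume hV
      (fun p hp => (hasFDerivAt_natExtBranch (hpole p hp).1 (hpole p hp).2).hasFDerivWithinAt)
      (natExtBranch_injective hN).injOn]
  refine setLIntegral_congr_fun hV fun p hp => ?_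
  rw [det_prodMap_toSpanSingleton, ← ENNReal.ofReal_mul (abs_nonneg _)]
  exact congrArg _ (abs_det_mul_density_natExtBranch hN (hpole p hp).1 (hpole p hp).2)

end Branch

section Cylinder

/-- The part of `S` whose first coordinates have digit `d` under `T_α`. -/
def digitCylinder (α : ℝ) (S : Set (ℝ × ℝ)) (d : ℤ) : Set (ℝ × ℝ) :=
  {p | p ∈ S ∧ ⌊2 / p.1 - α⌋ = d}

variable {α : ℝ} {S : Set (ℝ × ℝ)} {d : ℤ}

theorem measurable_natExtMap (α : ℝ) : Measurable (natExtMap α) := by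
  unfold natExtMap Texp
  fun_prop

theorem measurableSet_digitCylinder (hS : MeasurableSet S) :
    MeasurableSet (digitCylinder α S d) := by
  have hdigit : Measurable fun p : ℝ × ℝ => ⌊2 / p.1 - α⌋ := by fun_prop
  exact hS.inter (hdigit (measurableSet_singleton d))

theorem iUnion_digitCylinder (α : ℝ) (S : Set (ℝ × ℝ)) : ⋃ d, digitCylinder α S d = S := by
  ext p
  simp [digitCylinder]

theorem pairwise_disjoint_digitCylinder (α : ℝ) (S : Set (ℝ × ℝ)) :
    Pairwise (Function.onFun Disjoint (digitCylinder α S)) := fun _ _ hij =>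
  Set.disjoint_left.2 fun _ hi hj => hij (hi.2.symm.trans hj.2)

theorem eqOn_natExtMap_natExtBranch (α : ℝ) (S : Set (ℝ × ℝ)) (d : ℤ) :
    EqOn (natExtMap α) (natExtBranch 2 d) (digitCylinder α S d) := fun p hp => by
  simp [natExtMap, Texp, natExtBranch, Prod.map, hp.2]

theorem injOn_natExtMap_digitCylinder : InjOn (natExtMap α) (digitCylinder α S d) :=
  (eqOn_natExtMap_natExtBranch α S d).injOn_iff.2 (natExtBranch_injective two_ne_zero).injOn

-- No case distinction is needed at the poles, since `2 / (2 / t) = t` also holds for `t = 0`.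
theorem mem_natExtMap_image_digitCylinder {x y : ℝ} :
    (x, y) ∈ natExtMap α '' digitCylinder α S d ↔
      x ∈ Ico α (α + 1) ∧ (2 / (d + x), 2 / y - d) ∈ S := by
  rw [(eqOn_natExtMap_natExtBranch α S d).image_eq]
  constructor
  · rintro ⟨⟨x', y'⟩, ⟨hS, hd⟩, h⟩
    obtain ⟨rfl, rfl⟩ : 2 / x' - d = x ∧ 2 / (d + y') = y := Prod.ext_iff.1 h
    obtain ⟨hlower, hupper⟩ := Int.floor_eq_iff.1 hd
    refine ⟨⟨by linarith, by linarith⟩, ?_⟩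
    rwa [add_sub_cancel, div_div_cancel₀ two_ne_zero, div_div_cancel₀ two_ne_zero,
      add_sub_cancel_left]
  · rintro ⟨⟨hlower, hupper⟩, hS⟩
    refine ⟨_, ⟨hS, ?_⟩, ?_⟩
    · rw [div_div_cancel₀ two_ne_zero, Int.floor_eq_iff]
      constructor <;> linarith
    · simp [natExtBranch, div_div_cancel₀]

theorem natExtMeasure_natExtMap_image {K : ℝ} (hS : MeasurableSet S)
    (hsub : S ⊆ digitCylinder α univ d) (hpole : ∀ p ∈ S, p.1 ≠ 0 ∧ d + p.2 ≠ 0) :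
    natExtMeasure 2 K (natExtMap α '' S) = natExtMeasure 2 K S := by
  rw [((eqOn_natExtMap_natExtBranch α univ d).mono hsub).image_eq,
    natExtMeasure_image_natExtBranch two_ne_zero hS hpole]

/-- The least digit `d` with `2 / (d + x) ≤ α + 1`. -/
noncomputable def firstDigit (α x : ℝ) : ℤ := ⌈2 / (α + 1) - x⌉

/-- The greatest digit `d` with `α ≤ 2 / (d + x)`. -/
noncomputable def lastDigit (α x : ℝ) : ℤ := ⌊2 / α - x⌋

theorem two_div_add_mem_Icc_iff (hα : 0 < α) {x : ℝ} :
    2 / (d + x) ∈ Icc α (α + 1) ↔ d ∈ Icc (firstDigit α x) (lastDigit α x) := by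
  rw [mem_Icc, mem_Icc, firstDigit, lastDigit, Int.ceil_le, Int.le_floor, sub_le_iff_le_add,
    le_sub_iff_add_le]
  rcases le_or_gt (d + x) 0 with hneg | hpos
  · have hdiv : 2 / (d + x) ≤ 0 := div_nonpos_of_nonneg_of_nonpos zero_le_two hneg
    have hpos : 0 < 2 / (α + 1) := by positivity
    constructor <;> rintro ⟨_, _⟩ <;> linarith
  · rw [le_div_comm₀ hα hpos, div_le_comm₀ hpos (by positivity), and_comm]

end Cylinder

section Heights

/-- The height `A` of the leftmost step of the lower boundary `ℓ`. -/
noncomputable def heightA : ℝ := (√33 - 5) / 2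

/-- The height `B` of the middle step of the lower boundary `ℓ`. -/
noncomputable def heightB : ℝ := √2 - 1

/-- The height `C` of the rightmost step of the lower boundary `ℓ`. -/
noncomputable def heightC : ℝ := (√33 - 3) / 6

/-- The height `D` of the leftmost step of the upper boundary `u`. -/
noncomputable def heightD : ℝ := 2 * √2 - 2

/-- The height `E` of the middle step of the upper boundary `u`. -/
noncomputable def heightE : ℝ := (√33 - 3) / 2

/-- The height `F` of the rightmost step of the upper boundary `u`. -/
noncomputable def heightF : ℝ := √2

theorem lt_sqrt_two : 1.41 < √2 := Real.lt_sqrt_of_sq_lt (by norm_num)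

theorem sqrt_two_lt : √2 < 1.42 := (Real.sqrt_lt' (by norm_num)).2 (by norm_num)

theorem lt_sqrt_thirtyThree : 5.7 < √33 := Real.lt_sqrt_of_sq_lt (by norm_num)

theorem sqrt_thirtyThree_lt : √33 < 5.8 := (Real.sqrt_lt' (by norm_num)).2 (by norm_num)

theorem heightA_pos : 0 < heightA := by
  unfold heightA
  linarith [lt_sqrt_thirtyThree]

theorem heightA_lt_heightB : heightA < heightB := by
  unfold heightA heightB
  linarith [sqrt_thirtyThree_lt, lt_sqrt_two]

theorem heightB_lt_heightC : heightB < heightC := by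
  unfold heightB heightC
  linarith [sqrt_two_lt, lt_sqrt_thirtyThree]

theorem heightC_lt_heightD : heightC < heightD := by
  unfold heightC heightD
  linarith [sqrt_thirtyThree_lt, lt_sqrt_two]

theorem heightD_lt_heightE : heightD < heightE := by
  unfold heightD heightE
  linarith [sqrt_two_lt, lt_sqrt_thirtyThree]

theorem heightE_lt_heightF : heightE < heightF := by
  unfold heightE heightF
  linarith [sqrt_thirtyThree_lt, lt_sqrt_two]

theorem heightB_pos : 0 < heightB := heightA_pos.trans heightA_lt_heightB

theorem heightC_pos : 0 < heightC := heightB_pos.trans heightB_lt_heightC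

theorem heightD_pos : 0 < heightD := heightC_pos.trans heightC_lt_heightD

theorem heightE_pos : 0 < heightE := heightD_pos.trans heightD_lt_heightE

theorem heightF_pos : 0 < heightF := heightE_pos.trans heightE_lt_heightF

theorem heightE_eq : heightE = heightA + 1 := by
  unfold heightE heightA
  ring

theorem heightF_eq : heightF = heightB + 1 := by
  unfold heightF heightB
  ring

theorem two_div_heightA : 2 / heightA = 4 + heightE := by
  rw [div_eq_iff heightA_pos.ne', heightA, heightE]
  linear_combination -(1 / 4 : ℝ) * Real.sq_sqrt (show (0 : ℝ) ≤ 33 by norm_num)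

theorem two_div_heightB : 2 / heightB = 4 + heightD := by
  rw [div_eq_iff heightB_pos.ne', heightB, heightD]
  linear_combination -2 * Real.sq_sqrt (show (0 : ℝ) ≤ 2 by norm_num)

theorem two_div_heightC : 2 / heightC = 3 + heightE := by
  rw [div_eq_iff heightC_pos.ne', heightC, heightE]
  linear_combination -(1 / 12 : ℝ) * Real.sq_sqrt (show (0 : ℝ) ≤ 33 by norm_num)

theorem two_div_heightD : 2 / heightD = 2 + heightB := by
  rw [div_eq_iff heightD_pos.ne', heightD, heightB]
  linear_combination -2 * Real.sq_sqrt (show (0 : ℝ) ≤ 2 by norm_num)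

theorem two_div_heightE : 2 / heightE = 1 + heightC := by
  rw [div_eq_iff heightE_pos.ne', heightE, heightC]
  linear_combination -(1 / 12 : ℝ) * Real.sq_sqrt (show (0 : ℝ) ≤ 33 by norm_num)

theorem two_div_heightF : 2 / heightF = 1 + heightB := by
  rw [div_eq_iff heightF_pos.ne', heightF, heightB]
  linear_combination -Real.sq_sqrt (show (0 : ℝ) ≤ 2 by norm_num)

theorem quadratic_pos_of_heightA_lt {α : ℝ} (h : heightA < α) : 0 < α ^ 2 + 5 * α - 2 := by
  have hroot : heightA * (5 + heightA) = 2 := by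
    have h2 := div_eq_iff heightA_pos.ne' |>.1 two_div_heightA
    rw [heightE_eq] at h2
    linarith
  nlinarith [heightA_pos]

theorem quadratic_neg_of_lt_heightB {α : ℝ} (hα : 0 < α) (h : α < heightB) :
    α ^ 2 + 2 * α - 1 < 0 := by
  have hroot : heightB ^ 2 + 2 * heightB = 1 := by
    unfold heightB
    linear_combination Real.sq_sqrt (show (0 : ℝ) ≤ 2 by norm_num)
  nlinarith [heightB_pos]

end Heights

section EndpointOrbits

/-- The point `T_α(α)`, given by the formula valid when `α` has digit `4`. -/
noncomputable def leftOrbit₁ (α : ℝ) : ℝ := (2 - 4 * α) / α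

/-- The point `T_α²(α)`, given by the formula valid when `α` has digits `4, 1`. -/
noncomputable def leftOrbit₂ (α : ℝ) : ℝ := (3 * α - 1) / (1 - 2 * α)

/-- The point `T_α(α + 1)`, given by the formula valid when `α + 1` has digit `1`. -/
noncomputable def rightOrbit₁ (α : ℝ) : ℝ := (1 - α) / (1 + α)

/-- The point `T_α²(α + 1)`, given by the formula valid when `α + 1` has digits `1, 4`. -/
noncomputable def rightOrbit₂ (α : ℝ) : ℝ := (6 * α - 2) / (1 - α)

variable {α : ℝ}

theorem mem_Ioo_third_half (hα : α ∈ Ioo heightA heightB) : α ∈ Ioo (1 / 3) (1 / 2) := by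
  have hlower := hα.1
  have hupper := hα.2
  unfold heightA at hlower
  unfold heightB at hupper
  constructor <;> linarith [lt_sqrt_thirtyThree, sqrt_two_lt]

theorem pos_of_mem_Ioo_heights (hα : α ∈ Ioo heightA heightB) : 0 < α := heightA_pos.trans hα.1

theorem two_div_left (hα : α ≠ 0) : 2 / α = 4 + leftOrbit₁ α := by
  unfold leftOrbit₁
  field_simp
  ring

theorem two_div_right (hα : α ≠ -1) : 2 / (α + 1) = 1 + rightOrbit₁ α := by
  have hden : 1 + α ≠ 0 := fun h => hα (by linarith)
  rw [rightOrbit₁, add_comm α 1]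
  field_simp
  ring

theorem two_div_leftOrbit₁ (hα : α ≠ 1 / 2) : 2 / leftOrbit₁ α = 1 + leftOrbit₂ α := by
  have hden : 1 - 2 * α ≠ 0 := fun h => hα (by linarith)
  rw [leftOrbit₁, leftOrbit₂, div_div_eq_mul_div, show 2 - 4 * α = 2 * (1 - 2 * α) by ring]
  field_simp
  ring

theorem two_div_rightOrbit₁ (hα : α ≠ 1) : 2 / rightOrbit₁ α = 4 + rightOrbit₂ α := by
  have hden : 1 - α ≠ 0 := sub_ne_zero.2 hα.symm
  rw [rightOrbit₁, rightOrbit₂, div_div_eq_mul_div]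
  field_simp
  ring

theorem two_div_rightOrbit₂ (hα : α ≠ 1 / 3) : 2 / rightOrbit₂ α = 1 + 2 / leftOrbit₂ α := by
  have hden : 3 * α - 1 ≠ 0 := fun h => hα (by linarith)
  rw [rightOrbit₂, leftOrbit₂, div_div_eq_mul_div, div_div_eq_mul_div, one_add_div hden,
    show 6 * α - 2 = 2 * (3 * α - 1) by ring, mul_div_mul_left _ _ two_ne_zero]
  ring

theorem lt_rightOrbit₂ (hα : α ∈ Ioo heightA heightB) : α < rightOrbit₂ α := by
  obtain ⟨h3, h2⟩ := mem_Ioo_third_half hα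
  rw [rightOrbit₂, lt_div_iff₀ (by linarith)]
  linarith [quadratic_pos_of_heightA_lt hα.1]

theorem rightOrbit₂_lt_leftOrbit₁ (hα : α ∈ Ioo heightA heightB) :
    rightOrbit₂ α < leftOrbit₁ α := by
  obtain ⟨h3, h2⟩ := mem_Ioo_third_half hα
  rw [rightOrbit₂, leftOrbit₁, div_lt_div_iff₀ (by linarith) (by linarith)]
  linarith [quadratic_neg_of_lt_heightB (by linarith) hα.2]

theorem leftOrbit₁_lt (hα : α ∈ Ioo heightA heightB) : leftOrbit₁ α < α + 1 := by
  obtain ⟨h3, h2⟩ := mem_Ioo_third_half hα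
  rw [leftOrbit₁, div_lt_iff₀ (by linarith)]
  linarith [quadratic_pos_of_heightA_lt hα.1]

theorem lt_rightOrbit₁ (hα : α ∈ Ioo heightA heightB) : α < rightOrbit₁ α := by
  obtain ⟨h3, h2⟩ := mem_Ioo_third_half hα
  rw [rightOrbit₁, lt_div_iff₀ (by linarith)]
  linarith [quadratic_neg_of_lt_heightB (by linarith) hα.2]

theorem rightOrbit₁_lt_leftOrbit₂ (hα : α ∈ Ioo heightA heightB) :
    rightOrbit₁ α < leftOrbit₂ α := by
  obtain ⟨h3, h2⟩ := mem_Ioo_third_half hα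
  rw [rightOrbit₁, leftOrbit₂, div_lt_div_iff₀ (by linarith) (by linarith)]
  linarith [quadratic_pos_of_heightA_lt hα.1]

theorem leftOrbit₂_lt (hα : α ∈ Ioo heightA heightB) : leftOrbit₂ α < α + 1 := by
  obtain ⟨h3, h2⟩ := mem_Ioo_third_half hα
  rw [leftOrbit₂, div_lt_iff₀ (by linarith)]
  linarith [quadratic_neg_of_lt_heightB (by linarith) hα.2]

theorem rightOrbit₂_pos (hα : α ∈ Ioo heightA heightB) : 0 < rightOrbit₂ α :=
  (pos_of_mem_Ioo_heights hα).trans (lt_rightOrbit₂ hα)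

theorem leftOrbit₁_pos (hα : α ∈ Ioo heightA heightB) : 0 < leftOrbit₁ α :=
  (rightOrbit₂_pos hα).trans (rightOrbit₂_lt_leftOrbit₁ hα)

theorem rightOrbit₁_pos (hα : α ∈ Ioo heightA heightB) : 0 < rightOrbit₁ α :=
  (pos_of_mem_Ioo_heights hα).trans (lt_rightOrbit₁ hα)

theorem leftOrbit₂_pos (hα : α ∈ Ioo heightA heightB) : 0 < leftOrbit₂ α :=
  (rightOrbit₁_pos hα).trans (rightOrbit₁_lt_leftOrbit₂ hα)

theorem one_add_rightOrbit₁_lt (hα : α ∈ Ioo heightA heightB) :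
    1 + rightOrbit₁ α < 2 / leftOrbit₂ α := by
  have hpos := pos_of_mem_Ioo_heights hα
  rw [← two_div_right (by linarith)]
  exact div_lt_div_of_pos_left two_pos (leftOrbit₂_pos hα) (leftOrbit₂_lt hα)

theorem two_div_leftOrbit₂_lt (hα : α ∈ Ioo heightA heightB) :
    2 / leftOrbit₂ α < 3 + leftOrbit₁ α := by
  have hpos := pos_of_mem_Ioo_heights hα
  have hdiv : 2 / rightOrbit₂ α < 2 / α := div_lt_div_of_pos_left two_pos hpos (lt_rightOrbit₂ hα)
  rw [two_div_left hpos.ne', two_div_rightOrbit₂ (mem_Ioo_third_half hα).1.ne'] at hdiv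
  linarith

end EndpointOrbits

section ThreeStep

/-- The step function with value `a` on `(-∞, p]`, `b` on `(p, q]` and `c` on `(q, ∞)`
(for `p ≤ q`). -/
noncomputable def threeStep (p q a b c x : ℝ) : ℝ := if x ≤ p then a else if x ≤ q then b else c

variable {p q a b c x : ℝ}

theorem measurable_threeStep : Measurable (threeStep p q a b c) :=
  Measurable.ite measurableSet_Iic measurable_const
    (Measurable.ite measurableSet_Iic measurable_const measurable_const)

theorem threeStep_of_le (hx : x ≤ p) : threeStep p q a b c x = a := if_pos hx

theorem threeStep_of_mem_Ioc (hx : x ∈ Ioc p q) : threeStep p q a b c x = b :=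
  (if_neg hx.1.not_ge).trans (if_pos hx.2)

theorem threeStep_of_lt (hpq : p ≤ q) (hx : q < x) : threeStep p q a b c x = c :=
  (if_neg (hpq.trans_lt hx).not_ge).trans (if_neg hx.not_ge)

theorem le_threeStep (hab : a ≤ b) (hbc : b ≤ c) : a ≤ threeStep p q a b c x := by
  unfold threeStep
  split_ifs <;> order

theorem threeStep_le (hab : a ≤ b) (hbc : b ≤ c) : threeStep p q a b c x ≤ c := by
  unfold threeStep
  split_ifs <;> order

theorem div_threeStep (N : ℝ) :
    N / threeStep p q a b c x = threeStep p q (N / a) (N / b) (N / c) x := by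
  unfold threeStep
  split_ifs <;> rfl

theorem threeStep_div {N t : ℝ} (ht : 0 < t) (hp : 0 < p) (hq : 0 < q) :
    threeStep p q a b c (N / t) = if N / p ≤ t then a else if N / q ≤ t then b else c := by
  simp only [threeStep, div_le_comm₀ ht hp, div_le_comm₀ ht hq]

end ThreeStep

section Boundary

theorem lb_eq_threeStep (α : ℝ) :
    lb α = threeStep (rightOrbit₂ α) (leftOrbit₁ α) heightA heightB heightC := rfl

theorem ub_eq_threeStep (α : ℝ) :
    ub α = threeStep (rightOrbit₁ α) (leftOrbit₂ α) heightD heightE heightF := rfl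

theorem measurable_lb (α : ℝ) : Measurable (lb α) := measurable_threeStep

theorem measurable_ub (α : ℝ) : Measurable (ub α) := measurable_threeStep

theorem lb_pos (α x : ℝ) : 0 < lb α x :=
  heightA_pos.trans_le (le_threeStep heightA_lt_heightB.le heightB_lt_heightC.le)

theorem lb_lt_ub (α x x' : ℝ) : lb α x < ub α x' :=
  calc lb α x ≤ heightC := threeStep_le heightA_lt_heightB.le heightB_lt_heightC.le
    _ < heightD := heightC_lt_heightD
    _ ≤ ub α x' := le_threeStep heightD_lt_heightE.le heightE_lt_heightF.le

theorem ub_pos (α x : ℝ) : 0 < ub α x := (lb_pos α x).trans (lb_lt_ub α x x)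

theorem two_div_lb (α x : ℝ) :
    2 / lb α x = threeStep (rightOrbit₂ α) (leftOrbit₁ α) (4 + heightE) (4 + heightD)
      (3 + heightE) x := by
  rw [lb_eq_threeStep, div_threeStep, two_div_heightA, two_div_heightB, two_div_heightC]

theorem two_div_ub (α x : ℝ) :
    2 / ub α x = threeStep (rightOrbit₁ α) (leftOrbit₂ α) (2 + heightB) (1 + heightC)
      (1 + heightB) x := by
  rw [ub_eq_threeStep, div_threeStep, two_div_heightD, two_div_heightE, two_div_heightF]

variable {α : ℝ}

theorem lb_two_div (hα : α ∈ Ioo heightA heightB) {t : ℝ} (ht : 0 < t) :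
    lb α (2 / t) = if 1 + 2 / leftOrbit₂ α ≤ t then heightA
      else if 1 + leftOrbit₂ α ≤ t then heightB else heightC := by
  obtain ⟨h3, h2⟩ := mem_Ioo_third_half hα
  rw [lb_eq_threeStep, threeStep_div ht (rightOrbit₂_pos hα) (leftOrbit₁_pos hα),
    two_div_rightOrbit₂ h3.ne', two_div_leftOrbit₁ h2.ne]

theorem ub_two_div (hα : α ∈ Ioo heightA heightB) {t : ℝ} (ht : 0 < t) :
    ub α (2 / t) = if 4 + rightOrbit₂ α ≤ t then heightD
      else if 2 / leftOrbit₂ α ≤ t then heightE else heightF := by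
  have hne : α ≠ 1 := by linarith [(mem_Ioo_third_half hα).2]
  rw [ub_eq_threeStep, threeStep_div ht (rightOrbit₁_pos hα) (leftOrbit₂_pos hα),
    two_div_rightOrbit₁ hne]

end Boundary

section Matching

variable {α x : ℝ}

theorem ub_two_div_eq_lb_two_div_add_one (hα : α ∈ Ioo heightA heightB) {t : ℝ}
    (hlower : leftOrbit₂ α ≤ t) (hupper : t < 4 + rightOrbit₂ α) :
    ub α (2 / t) = lb α (2 / (t + 1)) + 1 := by
  have ht : 0 < t := (leftOrbit₂_pos hα).trans_le hlower
  rw [ub_two_div hα ht, lb_two_div hα (by linarith), heightE_eq, heightF_eq]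
  split_ifs <;> linarith

theorem two_div_ub_of_le_rightOrbit₁ (hα : α ∈ Ioo heightA heightB) (hx : α ≤ x)
    (hx' : x ≤ rightOrbit₁ α) : 2 / ub α x = 2 + lb α (2 / (2 + x)) := by
  have h₁ := one_add_rightOrbit₁_lt hα
  have h₂ := leftOrbit₂_lt hα
  have hpos := pos_of_mem_Ioo_heights hα
  rw [two_div_ub, threeStep, if_pos hx', lb_two_div hα (by linarith), if_neg (by linarith),
    if_pos (by linarith)]

theorem two_div_ub_of_rightOrbit₁_lt (hα : α ∈ Ioo heightA heightB) (hx : rightOrbit₁ α < x)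
    (hx' : x ≤ α + 1) (hne : x ≠ leftOrbit₂ α) : 2 / ub α x = 1 + lb α (2 / (1 + x)) := by
  have h₁ := one_add_rightOrbit₁_lt hα
  have h₂ := lt_rightOrbit₁ hα
  have hpos := rightOrbit₁_pos hα
  rw [two_div_ub, threeStep, if_neg hx.not_ge, lb_two_div hα (by linarith),
    if_neg (show ¬1 + 2 / leftOrbit₂ α ≤ 1 + x by linarith)]
  rcases hne.lt_or_gt with h | h
  · rw [if_pos h.le, if_neg (by linarith)]
  · rw [if_neg h.not_ge, if_pos (by linarith)]

theorem two_div_lb_of_le_leftOrbit₁ (hα : α ∈ Ioo heightA heightB) (hx : α ≤ x)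
    (hx' : x ≤ leftOrbit₁ α) (hne : x ≠ rightOrbit₂ α) :
    2 / lb α x = 4 + ub α (2 / (4 + x)) := by
  have h₁ := two_div_leftOrbit₂_lt hα
  have h₂ := leftOrbit₁_lt hα
  have hpos := pos_of_mem_Ioo_heights hα
  rw [two_div_lb, threeStep, ub_two_div hα (by linarith)]
  rcases hne.lt_or_gt with h | h
  · rw [if_pos h.le, if_neg (by linarith), if_pos (by linarith)]
  · rw [if_neg h.not_ge, if_pos hx', if_pos (by linarith)]

theorem two_div_lb_of_leftOrbit₁_lt (hα : α ∈ Ioo heightA heightB) (hx : leftOrbit₁ α < x)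
    (hx' : x ≤ α + 1) : 2 / lb α x = 3 + ub α (2 / (3 + x)) := by
  have h₁ := two_div_leftOrbit₂_lt hα
  have h₂ := lt_rightOrbit₂ hα
  have h₃ := rightOrbit₂_lt_leftOrbit₁ hα
  have hpos := leftOrbit₁_pos hα
  rw [two_div_lb, threeStep, if_neg (by linarith), if_neg hx.not_ge, ub_two_div hα (by linarith),
    if_neg (by linarith), if_pos (by linarith)]

theorem firstDigit_eq_two (hα : α ∈ Ioo heightA heightB) (hx : α ≤ x)
    (hx' : x < rightOrbit₁ α) : firstDigit α x = 2 := by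
  have h := (rightOrbit₁_lt_leftOrbit₂ hα).trans (leftOrbit₂_lt hα)
  have hpos := pos_of_mem_Ioo_heights hα
  rw [firstDigit, two_div_right (by linarith), Int.ceil_eq_iff]
  constructor <;> push_cast <;> linarith

theorem firstDigit_eq_one (hα : α ∈ Ioo heightA heightB) (hx : rightOrbit₁ α ≤ x)
    (hx' : x ≤ α + 1) : firstDigit α x = 1 := by
  have h := lt_rightOrbit₁ hα
  have hpos := pos_of_mem_Ioo_heights hα
  rw [firstDigit, two_div_right (by linarith), Int.ceil_eq_iff]
  constructor <;> push_cast <;> linarith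

theorem lastDigit_eq_four (hα : α ∈ Ioo heightA heightB) (hx : α ≤ x)
    (hx' : x ≤ leftOrbit₁ α) : lastDigit α x = 4 := by
  have h := leftOrbit₁_lt hα
  rw [lastDigit, two_div_left (pos_of_mem_Ioo_heights hα).ne', Int.floor_eq_iff]
  constructor <;> push_cast <;> linarith

theorem lastDigit_eq_three (hα : α ∈ Ioo heightA heightB) (hx : leftOrbit₁ α < x)
    (hx' : x ≤ α + 1) : lastDigit α x = 3 := by
  have h := (lt_rightOrbit₂ hα).trans (rightOrbit₂_lt_leftOrbit₁ hα)
  rw [lastDigit, two_div_left (pos_of_mem_Ioo_heights hα).ne', Int.floor_eq_iff]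
  constructor <;> push_cast <;> linarith

theorem two_div_ub_eq_firstDigit_add (hα : α ∈ Ioo heightA heightB) (hx : x ∈ Icc α (α + 1))
    (hr₁ : x ≠ rightOrbit₁ α) (hl₂ : x ≠ leftOrbit₂ α) :
    2 / ub α x = firstDigit α x + lb α (2 / (firstDigit α x + x)) := by
  rcases hr₁.lt_or_gt with h | h
  · rw [firstDigit_eq_two hα hx.1 h]
    exact_mod_cast two_div_ub_of_le_rightOrbit₁ hα hx.1 h.le
  · rw [firstDigit_eq_one hα h.le hx.2]
    exact_mod_cast two_div_ub_of_rightOrbit₁_lt hα h hx.2 hl₂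

theorem two_div_lb_eq_lastDigit_add (hα : α ∈ Ioo heightA heightB) (hx : x ∈ Icc α (α + 1))
    (hr₂ : x ≠ rightOrbit₂ α) :
    2 / lb α x = lastDigit α x + ub α (2 / (lastDigit α x + x)) := by
  rcases le_or_gt x (leftOrbit₁ α) with h | h
  · rw [lastDigit_eq_four hα hx.1 h]
    exact_mod_cast two_div_lb_of_le_leftOrbit₁ hα hx.1 h hr₂
  · rw [lastDigit_eq_three hα h hx.2]
    exact_mod_cast two_div_lb_of_leftOrbit₁_lt hα h hx.2

theorem firstDigit_mem_Icc (hα : α ∈ Ioo heightA heightB) (hx : x ∈ Icc α (α + 1)) :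
    firstDigit α x ∈ Icc 1 2 := by
  rcases lt_or_ge x (rightOrbit₁ α) with h | h
  · simp [firstDigit_eq_two hα hx.1 h]
  · simp [firstDigit_eq_one hα h hx.2]

theorem lastDigit_mem_Icc (hα : α ∈ Ioo heightA heightB) (hx : x ∈ Icc α (α + 1)) :
    lastDigit α x ∈ Icc 3 4 := by
  rcases le_or_gt x (leftOrbit₁ α) with h | h
  · simp [lastDigit_eq_four hα hx.1 h]
  · simp [lastDigit_eq_three hα h hx.2]

theorem add_ub_eq_succ_add_lb (hα : α ∈ Ioo heightA heightB) (hx : x ∈ Icc α (α + 1)) {d : ℤ}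
    (hd : d ∈ Ico (firstDigit α x) (lastDigit α x)) :
    d + ub α (2 / (d + x)) = (d + 1 : ℤ) + lb α (2 / ((d + 1 : ℤ) + x)) := by
  have hlower : (1 : ℝ) ≤ d := by exact_mod_cast (firstDigit_mem_Icc hα hx).1.trans hd.1
  have hupper : ((d + 1 : ℤ) : ℝ) ≤ 2 / α - x := Int.le_floor.1 hd.2
  rw [two_div_left (pos_of_mem_Ioo_heights hα).ne'] at hupper
  push_cast at hupper ⊢
  rw [ub_two_div_eq_lb_two_div_add_one hα, add_right_comm (d : ℝ) x 1]
  · ring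
  · linarith [leftOrbit₂_lt hα, hx.1]
  · linarith [leftOrbit₁_lt hα, lt_rightOrbit₂ hα]

end Matching

section ImageTiling

/-- The abscissae over which the images of the digit cylinders need not tile the fibre of `Ω_α`. -/
def exceptionalAbscissae (α : ℝ) : Set ℝ := {α + 1, rightOrbit₁ α, leftOrbit₂ α, rightOrbit₂ α}

variable {α x y : ℝ}

theorem countable_exceptionalAbscissae (α : ℝ) : (exceptionalAbscissae α).Countable :=
  (toFinite {α + 1, rightOrbit₁ α, leftOrbit₂ α, rightOrbit₂ α}).countable

theorem mem_natExtDom_iff_two_div :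
    (x, y) ∈ natExtDom α ↔ x ∈ Icc α (α + 1) ∧ 2 / y ∈ Icc (2 / ub α x) (2 / lb α x) := by
  refine and_congr_right fun _ => ?_
  change lb α x ≤ y ∧ y ≤ ub α x ↔ _
  rcases le_or_gt y 0 with hy | hy
  · have hdiv : 2 / y ≤ 0 := div_nonpos_of_nonneg_of_nonpos zero_le_two hy
    exact iff_of_false (fun h => ((lb_pos α x).trans_le h.1).not_ge hy)
      fun h => ((div_pos two_pos (ub_pos α x)).trans_le h.1).not_ge hdiv
  · rw [mem_Icc, div_le_div_iff_of_pos_left two_pos (ub_pos α x) hy,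
      div_le_div_iff_of_pos_left two_pos hy (lb_pos α x), and_comm]

theorem mem_image_digitCylinder_iff_two_div (hα : 0 < α) {d : ℤ} :
    (x, y) ∈ natExtMap α '' digitCylinder α (natExtDom α) d ↔
      x ∈ Ico α (α + 1) ∧ d ∈ Icc (firstDigit α x) (lastDigit α x) ∧
        2 / y ∈ Icc (d + lb α (2 / (d + x))) (d + ub α (2 / (d + x))) := by
  rw [mem_natExtMap_image_digitCylinder, ← two_div_add_mem_Icc_iff hα, mem_Icc (a := _ + _),
    ← le_sub_iff_add_le', ← sub_le_iff_le_add']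
  rfl

theorem pos_of_mem_natExtDom (hα : 0 < α) {p : ℝ × ℝ} (hp : p ∈ natExtDom α) :
    0 < p.1 ∧ 0 < p.2 :=
  ⟨hα.trans_le hp.1.1, (lb_pos α p.1).trans_le hp.2.1⟩

theorem add_lb_le_add_ub (α x : ℝ) (d : ℤ) : d + lb α (2 / (d + x)) ≤ d + ub α (2 / (d + x)) := by
  gcongr
  exact (lb_lt_ub α _ _).le

theorem exists_mem_Icc_digit_iff (hα : α ∈ Ioo heightA heightB) (hx : x ∈ Icc α (α + 1))
    (hx' : x ∉ exceptionalAbscissae α) {z : ℝ} :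
    (∃ d ∈ Icc (firstDigit α x) (lastDigit α x),
        z ∈ Icc (d + lb α (2 / (d + x))) (d + ub α (2 / (d + x)))) ↔
      z ∈ Icc (2 / ub α x) (2 / lb α x) := by
  simp only [exceptionalAbscissae, mem_insert_iff, mem_singleton_iff, not_or] at hx'
  obtain ⟨-, hr₁, hl₂, hr₂⟩ := hx'
  have hdigits : firstDigit α x ≤ lastDigit α x := by
    linarith [(firstDigit_mem_Icc hα hx).2, (lastDigit_mem_Icc hα hx).1]
  rw [two_div_ub_eq_firstDigit_add hα hx hr₁ hl₂, two_div_lb_eq_lastDigit_add hα hx hr₂]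
  exact exists_mem_Icc_iff_of_consecutive hdigits (add_lb_le_add_ub α x)
    fun _ => add_ub_eq_succ_add_lb hα hx

theorem exists_mem_image_digitCylinder_iff (hα : α ∈ Ioo heightA heightB)
    (hx : x ∉ exceptionalAbscissae α) :
    (∃ d, (x, y) ∈ natExtMap α '' digitCylinder α (natExtDom α) d) ↔ (x, y) ∈ natExtDom α := by
  have hne : x ≠ α + 1 := fun h => hx (by simp [exceptionalAbscissae, h])
  have hIco : x ∈ Ico α (α + 1) ↔ x ∈ Icc α (α + 1) :=
    and_congr_right fun _ => ⟨le_of_lt, fun h => h.lt_of_ne hne⟩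
  simp only [mem_image_digitCylinder_iff_two_div (pos_of_mem_Ioo_heights hα), hIco,
    exists_and_left, mem_natExtDom_iff_two_div]
  exact and_congr_right fun hxI => exists_mem_Icc_digit_iff hα hxI hx

theorem measurableSet_natExtDom (α : ℝ) : MeasurableSet (natExtDom α) :=
  (measurable_fst measurableSet_Icc).inter
    ((measurableSet_le ((measurable_lb α).comp measurable_fst) measurable_snd).inter
      (measurableSet_le measurable_snd ((measurable_ub α).comp measurable_fst)))

theorem iUnion_image_digitCylinder_ae_eq (hα : α ∈ Ioo heightA heightB) :
    ⋃ d, natExtMap α '' digitCylinder α (natExtDom α) d =ᵐ[volume] natExtDom α := by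
  filter_upwards [ae_fst_notMem (countable_exceptionalAbscissae α)] with p hp
  exact propext (mem_iUnion.trans (exists_mem_image_digitCylinder_iff hα hp))

theorem aedisjoint_image_digitCylinder_of_lt (hα : α ∈ Ioo heightA heightB) {i j : ℤ}
    (hij : i < j) :
    AEDisjoint volume (natExtMap α '' digitCylinder α (natExtDom α) i)
      (natExtMap α '' digitCylinder α (natExtDom α) j) := by
  have hpos := pos_of_mem_Ioo_heights hα
  have hmeas : Measurable fun x => 2 / (j + lb α (2 / (j + x))) :=
    measurable_const.div (((measurable_lb α).comp (by fun_prop)).const_add _)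
  rw [AEDisjoint, measure_eq_zero_iff_ae_notMem]
  filter_upwards [ae_snd_ne_comp_fst hmeas] with ⟨x, y⟩ hne
  rintro ⟨hi, hj⟩
  rw [mem_image_digitCylinder_iff_two_div hpos] at hi hj
  obtain ⟨hx, hdi, -, hupper⟩ := hi
  obtain ⟨-, hdj, hlower, -⟩ := hj
  have hle := right_le_left_of_consecutive (add_lb_le_add_ub α x)
    (fun d hd => add_ub_eq_succ_add_lb hα (Ico_subset_Icc_self hx) hd) hdi.1 hij hdj.2
  refine hne ?_
  rw [hlower.antisymm (hupper.trans hle), div_div_cancel₀ two_ne_zero]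

theorem pairwise_aedisjoint_image_digitCylinder (hα : α ∈ Ioo heightA heightB) :
    Pairwise (Function.onFun (AEDisjoint volume)
      fun d => natExtMap α '' digitCylinder α (natExtDom α) d) := fun _ _ hij =>
  hij.lt_or_gt.elim (aedisjoint_image_digitCylinder_of_lt hα)
    fun h => (aedisjoint_image_digitCylinder_of_lt hα h).symm

end ImageTiling

section Invariance

variable {α : ℝ}

theorem floor_two_div_sub_nonneg (hα : α ∈ Ioc 0 1) {x : ℝ} (hx : x ∈ Icc α (α + 1)) :
    0 ≤ ⌊2 / x - α⌋ := by
  rw [Int.floor_nonneg, sub_nonneg, le_div_iff₀ (hα.1.trans_le hx.1)]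
  nlinarith [hα.1, hα.2, hx.2]

theorem ne_zero_of_mem_digitCylinder_natExtDom (hα : α ∈ Ioc 0 1) {d : ℤ} {p : ℝ × ℝ}
    (hp : p ∈ digitCylinder α (natExtDom α) d) : p.1 ≠ 0 ∧ d + p.2 ≠ 0 := by
  obtain ⟨hx, hy⟩ := pos_of_mem_natExtDom hα.1 hp.1
  have hd : (0 : ℝ) ≤ d := by exact_mod_cast hp.2 ▸ floor_two_div_sub_nonneg hα hp.1.1
  exact ⟨hx.ne', by positivity⟩

theorem measurePreserving_natExtMap (hα : α ∈ Ioo heightA heightB) (K : ℝ) :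
    MeasurePreserving (natExtMap α) ((natExtMeasure 2 K).restrict (natExtDom α))
      ((natExtMeasure 2 K).restrict (natExtDom α)) := by
  have hα' : α ∈ Ioc 0 1 := ⟨pos_of_mem_Ioo_heights hα, by linarith [(mem_Ioo_third_half hα).2]⟩
  have hac : natExtMeasure 2 K ≪ volume := withDensity_absolutelyContinuous _ _
  have hcyl (d : ℤ) : MeasurableSet (digitCylinder α (natExtDom α) d) :=
    measurableSet_digitCylinder (measurableSet_natExtDom α)
  refine measurePreserving_restrict_of_image_tiling (measurable_natExtMap α) hcyl
    (iUnion_digitCylinder α (natExtDom α)).eventuallyEq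
    (fun _ _ hij => (pairwise_disjoint_digitCylinder α (natExtDom α) hij).aedisjoint)
    (fun d => ((hcyl d).image_of_measurable_injOn (measurable_natExtMap α)
      injOn_natExtMap_digitCylinder).nullMeasurableSet)
    (hac.ae_eq (iUnion_image_digitCylinder_ae_eq hα))
    (fun _ _ hij => hac (pairwise_aedisjoint_image_digitCylinder hα hij)) ?_
  intro d S hS hSmeas
  exact natExtMeasure_natExtMap_image hSmeas (fun p hp => ⟨mem_univ p, (hS hp).2⟩)
    fun p hp => ne_zero_of_mem_digitCylinder_natExtDom hα' (hS hp)

theorem volume_restrict_natExtDom_absolutelyContinuous (hα : 0 < α) {K : ℝ} (hK : 0 < K) :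
    volume.restrict (natExtDom α) ≪ (natExtMeasure 2 K).restrict (natExtDom α) := by
  rw [natExtMeasure, restrict_withDensity (measurableSet_natExtDom α)]
  refine withDensity_absolutelyContinuous' (measurable_natExtDensity 2 K).aemeasurable ?_
  filter_upwards [ae_restrict_mem (measurableSet_natExtDom α)] with p hp
  obtain ⟨hx, hy⟩ := pos_of_mem_natExtDom hα hp
  exact (ENNReal.ofReal_pos.2 (by positivity)).ne'

theorem ae_natExtMap_mem_natExtDom (hα : α ∈ Ioo heightA heightB) :
    ∀ᵐ p ∂(volume.restrict (natExtDom α)), natExtMap α p ∈ natExtDom α :=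
  (volume_restrict_natExtDom_absolutelyContinuous (pos_of_mem_Ioo_heights hα) one_pos).ae_le
    ((measurePreserving_natExtMap hα 1).quasiMeasurePreserving.ae
      (ae_restrict_mem (measurableSet_natExtDom α)))

end Invariance

section Mass

theorem setLIntegral_between {f : ℝ × ℝ → ENNReal} (hf : Measurable f) {l u : ℝ → ℝ}
    (hl : Measurable l) (hu : Measurable u) (s : Set ℝ) :
    ∫⁻ p in {p | p.1 ∈ s ∧ l p.1 ≤ p.2 ∧ p.2 ≤ u p.1}, f p =
      ∫⁻ x in s, ∫⁻ y in Icc (l x) (u x), f (x, y) := by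
  have hbetween : MeasurableSet {p : ℝ × ℝ | l p.1 ≤ p.2 ∧ p.2 ≤ u p.1} :=
    (measurableSet_le (hl.comp measurable_fst) measurable_snd).inter
      (measurableSet_le measurable_snd (hu.comp measurable_fst))
  have hset : {p : ℝ × ℝ | p.1 ∈ s ∧ l p.1 ≤ p.2 ∧ p.2 ≤ u p.1} =
      {p | l p.1 ≤ p.2 ∧ p.2 ≤ u p.1} ∩ s ×ˢ univ := by
    ext p
    simp [and_comm]
  rw [hset, ← setLIntegral_indicator hbetween, Measure.volume_eq_prod,
    setLIntegral_prod _ (hf.indicator hbetween).aemeasurable]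
  refine lintegral_congr fun x => ?_
  rw [Measure.restrict_univ, ← lintegral_indicator measurableSet_Icc]
  rfl

variable {N K : ℝ}

theorem hasDerivAt_div_add_mul {x y : ℝ} (h : N + x * y ≠ 0) :
    HasDerivAt (fun y => y / (N + x * y)) (N / (N + x * y) ^ 2) y := by
  have hden : HasDerivAt (fun y => N + x * y) x y := by
    simpa using ((hasDerivAt_id y).const_mul x).const_add N
  convert! (hasDerivAt_id y).div hden h using 1
  rw [id, one_mul, mul_comm y x, add_sub_cancel_right]

theorem setLIntegral_Icc_natExtDensity (hN : 0 < N) (hK : 0 ≤ K) {x l u : ℝ} (hx : 0 ≤ x)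
    (hl : 0 ≤ l) (hlu : l ≤ u) :
    ∫⁻ y in Icc l u, ENNReal.ofReal (K * N / (N + x * y) ^ 2) =
      ENNReal.ofReal (K * (u / (N + x * u) - l / (N + x * l))) := by
  have hne (y : ℝ) (hy : y ∈ Icc l u) : N + x * y ≠ 0 := by
    have hy0 : 0 ≤ y := hl.trans hy.1
    positivity
  have hcont : ContinuousOn (fun y => K * N / (N + x * y) ^ 2) (Icc l u) :=
    continuousOn_const.div (by fun_prop) fun y hy => pow_ne_zero 2 (hne y hy)
  rw [← uIcc_of_le hlu] at hne
  have hderiv (y : ℝ) (hy : y ∈ uIcc l u) :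
      HasDerivAt (fun y => K * (y / (N + x * y))) (K * N / (N + x * y) ^ 2) y := by
    rw [mul_div_assoc]
    exact (hasDerivAt_div_add_mul (hne y hy)).const_mul K
  rw [← ofReal_integral_eq_lintegral_ofReal hcont.integrableOn_Icc
    (.of_forall fun y => by positivity), integral_Icc_eq_integral_Ioc,
    ← intervalIntegral.integral_of_le hlu, mul_sub,
    intervalIntegral.integral_eq_sub_of_hasDerivAt hderiv
      (hcont.intervalIntegrable_of_Icc hlu)]

theorem natExtMeasure_between (hN : 0 < N) (hK : 0 ≤ K) {a b : ℝ} (ha : 0 ≤ a) (hab : a ≤ b)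
    {l u : ℝ → ℝ} (hl : Measurable l) (hu : Measurable u) (hl0 : ∀ x, 0 ≤ l x)
    (hlu : ∀ x, l x ≤ u x)
    (hlint : IntervalIntegrable (fun x => l x / (N + x * l x)) volume a b)
    (huint : IntervalIntegrable (fun x => u x / (N + x * u x)) volume a b) :
    natExtMeasure N K {p | p.1 ∈ Icc a b ∧ l p.1 ≤ p.2 ∧ p.2 ≤ u p.1} =
      ENNReal.ofReal (K * ((∫ x in a..b, u x / (N + x * u x)) -
        ∫ x in a..b, l x / (N + x * l x))) := by
  have hfibre : ∀ x ∈ Icc a b, 0 ≤ K * (u x / (N + x * u x) - l x / (N + x * l x)) := by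
    intro x hx
    have hx0 := ha.trans hx.1
    have hlx := hl0 x
    have hux := hlx.trans (hlu x)
    rw [div_sub_div _ _ (by positivity) (by positivity)]
    have hnum : 0 ≤ u x * (N + x * l x) - (N + x * u x) * l x := by nlinarith [hlu x]
    positivity
  have hint := (huint.sub hlint).const_mul K
  rw [intervalIntegrable_iff_integrableOn_Icc_of_le hab] at hint
  rw [natExtMeasure, withDensity_apply', setLIntegral_between (measurable_natExtDensity N K) hl hu,
    setLIntegral_congr_fun measurableSet_Icc fun x hx =>
      setLIntegral_Icc_natExtDensity hN hK (ha.trans hx.1) (hl0 x) (hlu x),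
    ← intervalIntegral.integral_sub huint hlint, ← intervalIntegral.integral_const_mul,
    intervalIntegral.integral_of_le hab, ← integral_Icc_eq_integral_Ioc,
    ofReal_integral_eq_lintegral_ofReal hint (ae_restrict_of_forall_mem measurableSet_Icc hfibre)]

section StepIntegral

variable {a b c : ℝ}

theorem intervalIntegrable_div_add_mul (hN : 0 < N) (ha : 0 ≤ a) (hab : a ≤ b) (hc : 0 ≤ c) :
    IntervalIntegrable (fun x => c / (N + x * c)) volume a b := by
  refine ContinuousOn.intervalIntegrable_of_Icc hab ?_
  refine continuousOn_const.div (by fun_prop) fun x hx => ?_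
  have hx0 := ha.trans hx.1
  positivity

theorem integral_div_add_mul (hN : 0 < N) (ha : 0 ≤ a) (hab : a ≤ b) (hc : 0 ≤ c) :
    ∫ x in a..b, c / (N + x * c) = Real.log (N + b * c) - Real.log (N + a * c) := by
  refine intervalIntegral.integral_eq_sub_of_hasDerivAt (f := fun x => Real.log (N + x * c))
    (fun x hx => ?_) (intervalIntegrable_div_add_mul hN ha hab hc)
  have hx0 := ha.trans (uIcc_of_le hab ▸ hx).1
  have hne : N + x * c ≠ 0 := by positivity
  simpa using (((hasDerivAt_id x).mul_const c).const_add N).log hne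

variable {f : ℝ → ℝ}

theorem intervalIntegrable_div_add_mul_of_eqOn (hN : 0 < N) (ha : 0 ≤ a) (hab : a ≤ b)
    (hc : 0 ≤ c) (hf : ∀ x ∈ Ioc a b, f x = c) :
    IntervalIntegrable (fun x => f x / (N + x * f x)) volume a b :=
  (intervalIntegrable_div_add_mul hN ha hab hc).congr fun x hx => by
    simp only [hf x (uIoc_of_le hab ▸ hx)]

theorem integral_div_add_mul_of_eqOn (hN : 0 < N) (ha : 0 ≤ a) (hab : a ≤ b)
    (hc : 0 ≤ c) (hf : ∀ x ∈ Ioc a b, f x = c) :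
    ∫ x in a..b, f x / (N + x * f x) = Real.log (N + b * c) - Real.log (N + a * c) := by
  rw [← integral_div_add_mul hN ha hab hc]
  refine intervalIntegral.integral_congr_ae (.of_forall fun x hx => ?_)
  rw [hf x (uIoc_of_le hab ▸ hx)]

end StepIntegral

section ThreeStepIntegral

variable {a b p q s₁ s₂ s₃ : ℝ}

theorem intervalIntegrable_threeStep_div (hN : 0 < N) (ha : 0 ≤ a) (hap : a ≤ p) (hpq : p ≤ q)
    (hqb : q ≤ b) (h₁ : 0 ≤ s₁) (h₂ : 0 ≤ s₂) (h₃ : 0 ≤ s₃) :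
    IntervalIntegrable (fun x => threeStep p q s₁ s₂ s₃ x / (N + x * threeStep p q s₁ s₂ s₃ x))
      volume a b := by
  have hp := ha.trans hap
  exact ((intervalIntegrable_div_add_mul_of_eqOn hN ha hap h₁ fun _ hx =>
      threeStep_of_le hx.2).trans
    (intervalIntegrable_div_add_mul_of_eqOn hN hp hpq h₂ fun _ => threeStep_of_mem_Ioc)).trans
    (intervalIntegrable_div_add_mul_of_eqOn hN (hp.trans hpq) hqb h₃ fun _ hx =>
      threeStep_of_lt hpq hx.1)

theorem integral_threeStep_div (hN : 0 < N) (ha : 0 ≤ a) (hap : a ≤ p) (hpq : p ≤ q)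
    (hqb : q ≤ b) (h₁ : 0 ≤ s₁) (h₂ : 0 ≤ s₂) (h₃ : 0 ≤ s₃) :
    ∫ x in a..b, threeStep p q s₁ s₂ s₃ x / (N + x * threeStep p q s₁ s₂ s₃ x) =
      (Real.log (N + p * s₁) - Real.log (N + a * s₁)) +
        (Real.log (N + q * s₂) - Real.log (N + p * s₂)) +
        (Real.log (N + b * s₃) - Real.log (N + q * s₃)) := by
  have hp := ha.trans hap
  have hint := intervalIntegrable_threeStep_div hN ha hap hpq hqb h₁ h₂ h₃
  have hintp : IntervalIntegrable _ volume a p :=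
    hint.mono_set (uIcc_subset_uIcc_left (mem_uIcc_of_le hap (hpq.trans hqb)))
  have hintq : IntervalIntegrable _ volume a q :=
    hint.mono_set (uIcc_subset_uIcc_left (mem_uIcc_of_le (hap.trans hpq) hqb))
  rw [← intervalIntegral.integral_add_adjacent_intervals hintq (hintq.symm.trans hint),
    ← intervalIntegral.integral_add_adjacent_intervals hintp (hintp.symm.trans hintq),
    integral_div_add_mul_of_eqOn hN ha hap h₁ fun _ hx => threeStep_of_le hx.2,
    integral_div_add_mul_of_eqOn hN hp hpq h₂ fun _ => threeStep_of_mem_Ioc,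
    integral_div_add_mul_of_eqOn hN (hp.trans hpq) hqb h₃ fun _ hx => threeStep_of_lt hpq hx.1]

end ThreeStepIntegral

section Corners

variable {d x x' : ℝ}

theorem add_mul_eq_div_mul {y y' : ℝ} (hx : x ≠ 0) (hy' : y' ≠ 0) (hdx : N / x = d + x')
    (hdy : N / y' = d + y) : N + x * y = x / y' * (N + x' * y') := by
  rw [div_eq_iff hx] at hdx
  rw [div_eq_iff hy'] at hdy
  field_simp
  linear_combination y' * hdx - x * hdy

theorem log_add_mul_sub_log_add_mul {y z y' z' : ℝ} (hN : 0 < N) (hx : 0 < x) (hx' : 0 < x')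
    (hy' : 0 < y') (hz' : 0 < z') (hdx : N / x = d + x') (hdy : N / y' = d + y)
    (hdz : N / z' = d + z) :
    Real.log (N + x * y) - Real.log (N + x * z) =
      Real.log (N + x' * y') - Real.log (N + x' * z') + Real.log z' - Real.log y' := by
  rw [add_mul_eq_div_mul hx.ne' hy'.ne' hdx hdy, add_mul_eq_div_mul hx.ne' hz'.ne' hdx hdz,
    Real.log_mul (by positivity) (by positivity), Real.log_mul (by positivity) (by positivity),
    Real.log_div hx.ne' hy'.ne', Real.log_div hx.ne' hz'.ne']
  ring

theorem log_add_mul_sub_log_add_mul_of_merge {y z : ℝ} (hx : x ≠ 0) (hx' : x' ≠ 0)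
    (hdx : N / x = d + N / x') (hy : N + x' * (d + y) ≠ 0) (hz : N + x' * (d + z) ≠ 0) :
    Real.log (N + x * y) - Real.log (N + x * z) =
      Real.log (N + x' * (d + y)) - Real.log (N + x' * (d + z)) := by
  have hcorner (t : ℝ) : N + x * t = x / x' * (N + x' * (d + t)) := by
    field_simp at hdx ⊢
    linear_combination hdx
  have hquot : x / x' ≠ 0 := div_ne_zero hx hx'
  rw [hcorner y, hcorner z, Real.log_mul hquot hy, Real.log_mul hquot hz, add_sub_add_left_eq_sub]

variable {α : ℝ}

theorem log_corners_left (hα : α ∈ Ioo heightA heightB) :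
    Real.log (2 + α * heightA) - Real.log (2 + α * heightD) =
      Real.log (2 + leftOrbit₁ α * heightC) - Real.log (2 + leftOrbit₁ α * heightB) +
        Real.log heightB - Real.log heightC := by
  have hpos := pos_of_mem_Ioo_heights hα
  have hA : 2 / heightC = 4 + heightA := by
    rw [two_div_heightC, heightE_eq]
    ring
  exact log_add_mul_sub_log_add_mul two_pos hpos (leftOrbit₁_pos hα) heightC_pos heightB_pos
    (two_div_left hpos.ne') hA two_div_heightB

theorem log_corners_leftOrbit₁ (hα : α ∈ Ioo heightA heightB) :
    Real.log (2 + leftOrbit₁ α * heightC) - Real.log (2 + leftOrbit₁ α * heightB) =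
      Real.log (2 + leftOrbit₂ α * heightE) - Real.log (2 + leftOrbit₂ α * heightF) +
        Real.log heightF - Real.log heightE :=
  log_add_mul_sub_log_add_mul two_pos (leftOrbit₁_pos hα) (leftOrbit₂_pos hα) heightE_pos
    heightF_pos (two_div_leftOrbit₁ (mem_Ioo_third_half hα).2.ne) two_div_heightE two_div_heightF

theorem log_corners_right (hα : α ∈ Ioo heightA heightB) :
    Real.log (2 + (α + 1) * heightF) - Real.log (2 + (α + 1) * heightC) =
      Real.log (2 + rightOrbit₁ α * heightD) - Real.log (2 + rightOrbit₁ α * heightE) +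
        Real.log heightE - Real.log heightD := by
  have hpos := pos_of_mem_Ioo_heights hα
  have hF : 2 / heightD = 1 + heightF := by
    rw [two_div_heightD, heightF_eq]
    ring
  exact log_add_mul_sub_log_add_mul two_pos (by linarith) (rightOrbit₁_pos hα) heightD_pos
    heightE_pos (two_div_right (by linarith)) hF two_div_heightE

theorem log_corners_rightOrbit₁ (hα : α ∈ Ioo heightA heightB) :
    Real.log (2 + rightOrbit₁ α * heightD) - Real.log (2 + rightOrbit₁ α * heightE) =
      Real.log (2 + rightOrbit₂ α * heightB) - Real.log (2 + rightOrbit₂ α * heightA) +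
        Real.log heightA - Real.log heightB := by
  have hne : α ≠ 1 := by linarith [(mem_Ioo_third_half hα).2]
  exact log_add_mul_sub_log_add_mul two_pos (rightOrbit₁_pos hα) (rightOrbit₂_pos hα) heightB_pos
    heightA_pos (two_div_rightOrbit₁ hne) two_div_heightB two_div_heightA

theorem log_corners_rightOrbit₂ (hα : α ∈ Ioo heightA heightB) :
    Real.log (2 + rightOrbit₂ α * heightB) - Real.log (2 + rightOrbit₂ α * heightA) =
      Real.log (2 + leftOrbit₂ α * heightF) - Real.log (2 + leftOrbit₂ α * heightE) := by
  have hl₂ := leftOrbit₂_pos hα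
  have hA := heightA_pos
  have hB := heightB_pos
  rw [heightF_eq, heightE_eq, add_comm heightB 1, add_comm heightA 1]
  exact log_add_mul_sub_log_add_mul_of_merge (rightOrbit₂_pos hα).ne' hl₂.ne'
    (two_div_rightOrbit₂ (mem_Ioo_third_half hα).1.ne') (by positivity) (by positivity)

theorem log_corners_eq (hα : α ∈ Ioo heightA heightB) :
    (Real.log (2 + rightOrbit₁ α * heightD) - Real.log (2 + α * heightD)) +
          (Real.log (2 + leftOrbit₂ α * heightE) - Real.log (2 + rightOrbit₁ α * heightE)) +
          (Real.log (2 + (α + 1) * heightF) - Real.log (2 + leftOrbit₂ α * heightF)) -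
        ((Real.log (2 + rightOrbit₂ α * heightA) - Real.log (2 + α * heightA)) +
          (Real.log (2 + leftOrbit₁ α * heightB) - Real.log (2 + rightOrbit₂ α * heightB)) +
          (Real.log (2 + (α + 1) * heightC) - Real.log (2 + leftOrbit₁ α * heightC))) =
      2 * Real.log heightF + 2 * Real.log heightA - Real.log heightB - Real.log heightC -
        Real.log heightD - Real.log heightE := by
  linarith [log_corners_left hα, log_corners_leftOrbit₁ hα, log_corners_right hα,
    log_corners_rightOrbit₁ hα, log_corners_rightOrbit₂ hα]

end Corners

theorem normalizingConstant_eq :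
    (1 / 32) * (3 + 2 * √2) * (7 + √33) * (√33 - 5) ^ 2 =
      heightF ^ 2 * heightA ^ 2 / (heightB * heightC * heightD * heightE) := by
  have hB := heightB_pos
  have hC := heightC_pos
  have hD := heightD_pos
  have hE := heightE_pos
  rw [eq_div_iff (by positivity)]
  have h2 : √2 ^ 2 = 2 := Real.sq_sqrt (by norm_num)
  have h33 : √33 ^ 2 = 33 := Real.sq_sqrt (by norm_num)
  unfold heightA heightB heightC heightD heightE heightF
  grind

theorem log_normalizingConstant :
    Real.log ((1 / 32) * (3 + 2 * √2) * (7 + √33) * (√33 - 5) ^ 2) =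
      2 * Real.log heightF + 2 * Real.log heightA - Real.log heightB - Real.log heightC -
        Real.log heightD - Real.log heightE := by
  have hA := heightA_pos
  have hB := heightB_pos
  have hC := heightC_pos
  have hD := heightD_pos
  have hE := heightE_pos
  have hF := heightF_pos
  rw [normalizingConstant_eq, Real.log_div (by positivity) (by positivity),
    Real.log_mul (by positivity) (by positivity), Real.log_mul (by positivity) (by positivity),
    Real.log_mul (by positivity) (by positivity), Real.log_mul (by positivity) (by positivity),
    Real.log_pow, Real.log_pow]
  push_cast
  ring

theorem log_normalizingConstant_pos :
    0 < Real.log ((1 / 32) * (3 + 2 * √2) * (7 + √33) * (√33 - 5) ^ 2) := by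
  refine Real.log_pos ?_
  calc (1 : ℝ) < (1 / 32) * (3 + 2 * 1.41) * (7 + 5.7) * (5.7 - 5) ^ 2 := by norm_num
    _ < (1 / 32) * (3 + 2 * √2) * (7 + √33) * (√33 - 5) ^ 2 := by
      gcongr
      exacts [lt_sqrt_two, lt_sqrt_thirtyThree, lt_sqrt_thirtyThree]

theorem natExtMeasure_natExtDom {α : ℝ} (hα : α ∈ Ioo heightA heightB) (hK : 0 ≤ K) :
    natExtMeasure 2 K (natExtDom α) = ENNReal.ofReal
      (K * Real.log ((1 / 32) * (3 + 2 * √2) * (7 + √33) * (√33 - 5) ^ 2)) := by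
  have hpos := (pos_of_mem_Ioo_heights hα).le
  have hlower := integral_threeStep_div two_pos hpos (lt_rightOrbit₂ hα).le
    (rightOrbit₂_lt_leftOrbit₁ hα).le (leftOrbit₁_lt hα).le
    heightA_pos.le heightB_pos.le heightC_pos.le
  have hupper := integral_threeStep_div two_pos hpos (lt_rightOrbit₁ hα).le
    (rightOrbit₁_lt_leftOrbit₂ hα).le (leftOrbit₂_lt hα).le
    heightD_pos.le heightE_pos.le heightF_pos.le
  rw [← lb_eq_threeStep] at hlower
  rw [← ub_eq_threeStep] at hupper
  rw [log_normalizingConstant, ← log_corners_eq hα, ← hlower, ← hupper]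
  refine natExtMeasure_between two_pos hK hpos (by linarith) (measurable_lb α) (measurable_ub α)
    (fun x => (lb_pos α x).le) (fun x => (lb_lt_ub α x x).le) ?_ ?_
  · exact intervalIntegrable_threeStep_div two_pos hpos (lt_rightOrbit₂ hα).le
      (rightOrbit₂_lt_leftOrbit₁ hα).le (leftOrbit₁_lt hα).le
      heightA_pos.le heightB_pos.le heightC_pos.le
  · exact intervalIntegrable_threeStep_div two_pos hpos (lt_rightOrbit₁ hα).le
      (rightOrbit₁_lt_leftOrbit₂ hα).le (leftOrbit₂_lt hα).le
      heightD_pos.le heightE_pos.le heightF_pos.le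

end Mass

theorem stmt_16 (α : ℝ) (h₁ : (Real.sqrt 33 - 5) / 2 < α) (h₂ : α < Real.sqrt 2 - 1) :
    (∀ᵐ p ∂(volume.restrict (natExtDom α)), natExtMap α p ∈ natExtDom α) ∧
    MeasurePreserving (natExtMap α)
      ((volume.restrict (natExtDom α)).withDensity fun p =>
        ENNReal.ofReal
          ((1 / Real.log ((1 / 32) * (3 + 2 * Real.sqrt 2) * (7 + Real.sqrt 33) *
              (Real.sqrt 33 - 5) ^ 2)) * 2 / (2 + p.1 * p.2) ^ 2))
      ((volume.restrict (natExtDom α)).withDensity fun p =>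
        ENNReal.ofReal
          ((1 / Real.log ((1 / 32) * (3 + 2 * Real.sqrt 2) * (7 + Real.sqrt 33) *
              (Real.sqrt 33 - 5) ^ 2)) * 2 / (2 + p.1 * p.2) ^ 2)) ∧
    IsProbabilityMeasure
      ((volume.restrict (natExtDom α)).withDensity fun p =>
        ENNReal.ofReal
          ((1 / Real.log ((1 / 32) * (3 + 2 * Real.sqrt 2) * (7 + Real.sqrt 33) *
              (Real.sqrt 33 - 5) ^ 2)) * 2 / (2 + p.1 * p.2) ^ 2)) := by
  have hα : α ∈ Ioo heightA heightB := ⟨h₁, h₂⟩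
  have hlog := log_normalizingConstant_pos
  have hrestrict (K : ℝ) : (natExtMeasure 2 K).restrict (natExtDom α) =
      (volume.restrict (natExtDom α)).withDensity fun p =>
        ENNReal.ofReal (K * 2 / (2 + p.1 * p.2) ^ 2) :=
    restrict_withDensity (measurableSet_natExtDom α) _
  rw [← hrestrict]
  refine ⟨ae_natExtMap_mem_natExtDom hα, measurePreserving_natExtMap hα _, ⟨?_⟩⟩
  rw [Measure.restrict_apply_univ, natExtMeasure_natExtDom hα (by positivity),
    one_div_mul_cancel hlog.ne', ENNReal.ofReal_one]
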